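/- Radó's theorem in several variables: let U be an open subset of ℂⁿ and let g : ℂⁿ → ℂ be continuous on U and holomorphic (complex differentiable) at every point of U \ g⁻¹({0}). Then g is holomorphic on all of U. -/

import Mathlib

/-!
Near a point where it is not locally zero, a function of one variable satisfying the hypotheses is
the sum of a holomorphic function and the conjugate of one. Off the zero set of `f`, the maximum
principle for a holomorphic `h` only needs the boundary values of `h` on the boundary of the disc:
apply it to `h ^ n * f`, which vanishes on the zero set, and let `n → ∞`. Passing to `exp h` gives
the same for real parts, hence for sums `a + conj b`. So if `p + conj q`, with `p` and `q`
polynomials, approximates `f` on the circle (trigonometric approximation), it does so on the closure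
of the set where `f ≠ 0`, and there `f` is the Poisson integral of its boundary values, that is
`A + conj B` with `A` and `B` holomorphic. That closure is a neighbourhood of the centre, and
`deriv B` vanishes wherever `f` is differentiable, a dense set; so `deriv B = 0`.

For several variables, restrict to complex lines. A continuous function that is holomorphic on
lines is holomorphic: two applications of the Schwarz lemma bound second differences, which makes
the directional derivative additive in the direction, and its second-order form bounds the Taylor
remainder uniformly in the direction.
-/

open Complex Metric Set Filter Topology
open scoped ComplexConjugate Polynomial

lemma le_of_forall_pow_mul_le_pow_mul {a b c K : ℝ} (hb : 0 ≤ b) (hc : 0 < c)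
    (h : ∀ n : ℕ, a ^ n * c ≤ b ^ n * K) : a ≤ b := by
  by_contra! hba
  rcases hb.eq_or_lt with rfl | hb
  · have := h 1
    simp only [pow_one, zero_mul] at this
    exact this.not_gt (mul_pos hba hc)
  obtain ⟨n, hn⟩ := pow_unbounded_of_one_lt (K / c) ((one_lt_div hb).2 hba)
  rw [div_pow, div_lt_div_iff₀ hc (pow_pos hb n)] at hn
  linarith [h n]

lemma isOpen_diff_preimage_zero {X Y : Type*} [TopologicalSpace X] [TopologicalSpace Y]
    [T1Space Y] [Zero Y] {U : Set X} {f : X → Y} (hU : IsOpen U) (hf : ContinuousOn f U) :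
    IsOpen (U \ f ⁻¹' {0}) :=
  hf.isOpen_inter_preimage hU isOpen_compl_singleton

lemma mem_frontier_of_mem_frontier_diff_preimage_zero {X Y : Type*} [TopologicalSpace X]
    [TopologicalSpace Y] [T1Space Y] [Zero Y] {U : Set X} {f : X → Y} {x : X} (hU : IsOpen U)
    (hf : ContinuousOn f U) (hx : x ∈ frontier (U \ f ⁻¹' {0})) (hfx : f x ≠ 0) :
    x ∈ frontier U := by
  rw [(isOpen_diff_preimage_zero hU hf).frontier_eq] at hx
  rw [hU.frontier_eq]
  exact ⟨closure_mono sdiff_subset hx.1, fun hxU => hx.2 ⟨hxU, hfx⟩⟩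

section MaximumPrinciple

variable {E F : Type*} [NormedAddCommGroup E] [NormedSpace ℂ E] [FiniteDimensional ℂ E]
  [Nontrivial E] [NormedAddCommGroup F] [NormedSpace ℂ F] {U : Set E} {f : E → F} {M : ℝ}

/-- Apply the maximum principle to `h ^ n • f`, which is small where `f` is; then let `n → ∞`. -/
lemma norm_le_of_forall_mem_frontier_of_diff_preimage_zero {h : E → ℂ} (hU : IsOpen U)
    (hUb : Bornology.IsBounded U) (hf : ContinuousOn f (closure U))
    (hd : DifferentiableOn ℂ f (U \ f ⁻¹' {0})) (hh : DiffContOnCl ℂ h (U \ f ⁻¹' {0}))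
    (hM : 0 ≤ M) (hhM : ∀ w ∈ frontier U ∩ closure (U \ f ⁻¹' {0}), ‖h w‖ ≤ M) {z : E}
    (hz : z ∈ closure (U \ f ⁻¹' {0})) : ‖h z‖ ≤ M := by
  have : ProperSpace E := FiniteDimensional.proper ℂ E
  have hcl : closure (U \ f ⁻¹' {0}) ⊆ closure U := closure_mono sdiff_subset
  obtain ⟨K, hK⟩ := hUb.isCompact_closure.exists_bound_of_continuousOn hf
  refine le_on_closure (fun w hw => ?_) hh.2.norm continuousOn_const hz
  refine le_of_forall_pow_mul_le_pow_mul hM (norm_pos_iff.2 hw.2) (K := K) fun n => ?_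
  have hbound : ∀ x ∈ frontier (U \ f ⁻¹' {0}), ‖h x ^ n • f x‖ ≤ M ^ n * K := by
    intro x hx
    have hxcl := frontier_subset_closure hx
    have hfx := hK x (hcl hxcl)
    have hK0 := (norm_nonneg _).trans hfx
    by_cases hfx0 : f x = 0
    · rw [hfx0, smul_zero, norm_zero]
      positivity
    · have hhx := hhM x
        ⟨mem_frontier_of_mem_frontier_diff_preimage_zero hU (hf.mono subset_closure) hx hfx0, hxcl⟩
      rw [norm_smul, norm_pow]
      gcongr
  have hprod : DiffContOnCl ℂ (fun x => h x ^ n • f x) (U \ f ⁻¹' {0}) :=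
    ⟨(hh.1.pow n).smul hd, (hh.2.pow n).smul (hf.mono hcl)⟩
  simpa only [norm_smul, norm_pow] using norm_le_of_forall_mem_frontier_norm_le
    (hUb.subset sdiff_subset) hprod hbound (subset_closure hw)

lemma re_le_of_forall_mem_frontier_of_diff_preimage_zero {h : E → ℂ} (hU : IsOpen U)
    (hUb : Bornology.IsBounded U) (hf : ContinuousOn f (closure U))
    (hd : DifferentiableOn ℂ f (U \ f ⁻¹' {0})) (hh : DiffContOnCl ℂ h (U \ f ⁻¹' {0}))
    (hhM : ∀ w ∈ frontier U ∩ closure (U \ f ⁻¹' {0}), (h w).re ≤ M) {z : E}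
    (hz : z ∈ closure (U \ f ⁻¹' {0})) : (h z).re ≤ M := by
  have hexp : ‖exp (h z)‖ ≤ Real.exp M :=
    norm_le_of_forall_mem_frontier_of_diff_preimage_zero (h := fun w => exp (h w)) hU hUb hf hd
      ⟨hh.1.cexp, hh.2.cexp⟩ (Real.exp_pos M).le
      (fun w hw => by simpa only [norm_exp, Real.exp_le_exp] using hhM w hw) hz
  simpa only [norm_exp, Real.exp_le_exp] using hexp

lemma norm_add_conj_le_of_forall_mem_frontier_of_diff_preimage_zero {a b : E → ℂ}
    (hU : IsOpen U) (hUb : Bornology.IsBounded U) (hf : ContinuousOn f (closure U))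
    (hd : DifferentiableOn ℂ f (U \ f ⁻¹' {0})) (ha : DiffContOnCl ℂ a (U \ f ⁻¹' {0}))
    (hb : DiffContOnCl ℂ b (U \ f ⁻¹' {0}))
    (hM : ∀ w ∈ frontier U ∩ closure (U \ f ⁻¹' {0}), ‖a w + conj (b w)‖ ≤ M) {z : E}
    (hz : z ∈ closure (U \ f ⁻¹' {0})) : ‖a z + conj (b z)‖ ≤ M := by
  obtain ⟨u, hu, hnorm⟩ := exists_norm_eq_mul_self (a z + conj (b z))
  have hre : ∀ w, (u * a w + conj u * b w).re = (u * (a w + conj (b w))).re := by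
    intro w
    simp only [add_re, mul_re, conj_re, conj_im, add_im]
    ring
  have hbound : ∀ w ∈ frontier U ∩ closure (U \ f ⁻¹' {0}), (u * a w + conj u * b w).re ≤ M := by
    intro w hw
    calc (u * a w + conj u * b w).re = (u * (a w + conj (b w))).re := hre w
      _ ≤ ‖u * (a w + conj (b w))‖ := re_le_norm _
      _ = ‖a w + conj (b w)‖ := by rw [norm_mul, hu, one_mul]
      _ ≤ M := hM w hw
  have hz_le := re_le_of_forall_mem_frontier_of_diff_preimage_zero hU hUb hf hd
    ((ha.const_smul u).add (hb.const_smul (conj u))) hbound hz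
  rw [← ofReal_re ‖a z + conj (b z)‖, hnorm, ← hre]
  exact hz_le

end MaximumPrinciple

/-- A point `b` outside the closure would make `(w - b)⁻¹` violate the maximum principle at the
centre. -/
lemma ball_half_subset_closure_diff_preimage_zero {F : Type*} [NormedAddCommGroup F]
    [NormedSpace ℂ F] {f : ℂ → F} {c : ℂ} {R : ℝ} (hf : ContinuousOn f (closedBall c R))
    (hd : DifferentiableOn ℂ f (ball c R \ f ⁻¹' {0})) (hc : c ∈ closure (ball c R \ f ⁻¹' {0})) :
    ball c (R / 2) ⊆ closure (ball c R \ f ⁻¹' {0}) := by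
  intro b hb
  by_contra hbcl
  have hR : 0 < R := by linarith [pos_of_mem_ball hb]
  have hne : ∀ w ∈ closure (ball c R \ f ⁻¹' {0}), w - b ≠ 0 := fun w hw hwb =>
    hbcl (sub_eq_zero.1 hwb ▸ hw)
  have hinv : DiffContOnCl ℂ (fun w => (w - b)⁻¹) (ball c R \ f ⁻¹' {0}) :=
    (differentiable_id.sub_const b).diffContOnCl.inv hne
  have hsphere : ∀ w ∈ frontier (ball c R), ‖(w - b)⁻¹‖ ≤ (R / 2)⁻¹ := by
    intro w hw
    rw [frontier_ball c hR.ne', mem_sphere] at hw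
    have := dist_triangle_right w c b
    rw [norm_inv, ← dist_eq_norm]
    gcongr
    linarith [mem_ball.1 hb, dist_triangle w b c]
  have hcentre := norm_le_of_forall_mem_frontier_of_diff_preimage_zero isOpen_ball isBounded_ball
    (hf.mono closure_ball_subset_closedBall) hd hinv (by positivity)
    (fun w hw => hsphere w hw.1) hc
  rw [norm_inv, inv_le_inv₀ (norm_pos_iff.2 (hne c hc)) (by positivity), ← dist_eq_norm,
    dist_comm] at hcentre
  exact hcentre.not_gt hb

section PoissonIntegral

lemma norm_circleAverage_le_circleAverage_norm {E : Type*} [NormedAddCommGroup E]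
    [NormedSpace ℝ E] (f : ℂ → E) (c : ℂ) (R : ℝ) :
    ‖Real.circleAverage f c R‖ ≤ Real.circleAverage (fun z => ‖f z‖) c R := by
  rw [Real.circleAverage_def, Real.circleAverage_def, norm_smul, smul_eq_mul,
    Real.norm_of_nonneg (inv_pos.2 Real.two_pi_pos).le]
  gcongr
  exact intervalIntegral.norm_integral_le_integral_norm Real.two_pi_pos.le

variable {c w : ℂ} {R : ℝ}

lemma poissonKernel_nonneg {z : ℂ} (hz : z ∈ sphere c R) (hw : w ∈ ball c R) :
    0 ≤ poissonKernel c w z := by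
  rw [mem_sphere_iff_norm] at hz
  rw [mem_ball_iff_norm] at hw
  rw [poissonKernel_def, hz]
  have := sq_le_sq₀ (norm_nonneg (w - c)) ((norm_nonneg _).trans hw.le) |>.2 hw.le
  exact div_nonneg (sub_nonneg.2 this) (sq_nonneg _)

lemma continuousOn_poissonKernel_sphere (hw : w ∈ ball c R) :
    ContinuousOn (poissonKernel c w) (sphere c |R|) := by
  rw [poissonKernel_eq_re_herglotzRieszKernel]
  exact continuous_re.comp_continuousOn (continuousOn_herglotzRieszKernel_sphere hw)

lemma norm_circleAverage_poissonKernel_smul_le {E : Type*} [NormedAddCommGroup E]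
    [NormedSpace ℝ E] {g : ℂ → E} {M : ℝ} (hw : w ∈ ball c R)
    (hg : ContinuousOn g (sphere c |R|)) (hM : ∀ z ∈ sphere c |R|, ‖g z‖ ≤ M) :
    ‖Real.circleAverage (poissonKernel c w • g) c R‖ ≤ M := by
  have hP := continuousOn_poissonKernel_sphere hw
  have hR := abs_of_pos (pos_of_mem_ball hw)
  calc ‖Real.circleAverage (poissonKernel c w • g) c R‖
      ≤ Real.circleAverage (fun z => ‖poissonKernel c w z • g z‖) c R :=
        norm_circleAverage_le_circleAverage_norm _ c R
    _ ≤ Real.circleAverage (poissonKernel c w • fun _ => M) c R := by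
        refine Real.circleAverage_mono (hP.smul hg).norm.circleIntegrable'
          (hP.smul continuousOn_const).circleIntegrable' fun z hz => ?_
        have := poissonKernel_nonneg (hR ▸ hz) hw
        rw [norm_smul, Real.norm_of_nonneg this]
        exact mul_le_mul_of_nonneg_left (hM z hz) this
    _ = M := InnerProductSpace.HarmonicOnNhd.circleAverage_poissonKernel_smul
        (InnerProductSpace.harmonicOnNhd_const _) hw

lemma circleAverage_add_conj {f g : ℂ → ℂ} (hf : CircleIntegrable f c R)
    (hg : CircleIntegrable g c R) : Real.circleAverage (fun z => f z + conj (g z)) c R =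
      Real.circleAverage f c R + conj (Real.circleAverage g c R) := by
  have hconj : CircleIntegrable (fun z => conj (g z)) c R :=
    ⟨conjCLE.toContinuousLinearMap.integrable_comp hg.1,
      conjCLE.toContinuousLinearMap.integrable_comp hg.2⟩
  rw [Real.circleAverage_fun_add hf hconj]
  congr 1
  exact conjCLE.toContinuousLinearMap.circleAverage_comp_comm hg

lemma circleAverage_poissonKernel_smul_add_conj {p q : ℂ → ℂ} (hp : DiffContOnCl ℂ p (ball c R))
    (hq : DiffContOnCl ℂ q (ball c R)) (hw : w ∈ ball c R) :
    Real.circleAverage (poissonKernel c w • fun z => p z + conj (q z)) c R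
      = p w + conj (q w) := by
  have hR : |R| = R := abs_of_pos (pos_of_mem_ball hw)
  have hPg {g : ℂ → ℂ} (hg : DiffContOnCl ℂ g (ball c R)) :
      CircleIntegrable (poissonKernel c w • g) c R :=
    ((continuousOn_poissonKernel_sphere hw).smul
      (hR.symm ▸ hg.continuousOn_ball.mono sphere_subset_closedBall)).circleIntegrable'
  rw [← hp.circleAverage_poissonKernel_smul hw, ← hq.circleAverage_poissonKernel_smul hw,
    ← circleAverage_add_conj (hPg hp) (hPg hq)]
  congr 1
  ext z
  simp

lemma circleAverage_poissonKernel_smul_of_approx {f : ℂ → ℂ} (hw : w ∈ ball c R)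
    (hf : ContinuousOn f (sphere c |R|))
    (happrox : ∀ ε > 0, ∃ p q : ℂ → ℂ, DiffContOnCl ℂ p (ball c R) ∧ DiffContOnCl ℂ q (ball c R) ∧
      ∀ z ∈ insert w (sphere c R), ‖f z - (p z + conj (q z))‖ ≤ ε) :
    Real.circleAverage (poissonKernel c w • f) c R = f w := by
  have hR : |R| = R := abs_of_pos (pos_of_mem_ball hw)
  have hP := continuousOn_poissonKernel_sphere hw
  refine eq_of_forall_dist_le fun ε hε => ?_
  obtain ⟨p, q, hp, hq, hpq⟩ := happrox (ε / 2) (half_pos hε)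
  have hcont {h : ℂ → ℂ} (hh : DiffContOnCl ℂ h (ball c R)) : ContinuousOn h (sphere c |R|) :=
    hR.symm ▸ hh.continuousOn_ball.mono sphere_subset_closedBall
  have hg : ContinuousOn (fun z => p z + conj (q z)) (sphere c |R|) :=
    (hcont hp).add (continuous_conj.comp_continuousOn (hcont hq))
  have hdiff : Real.circleAverage (poissonKernel c w • f) c R - (p w + conj (q w))
      = Real.circleAverage (poissonKernel c w • (f - fun z => p z + conj (q z))) c R := by
    rw [smul_sub, Real.circleAverage_sub (hP.smul hf).circleIntegrable'
      (hP.smul hg).circleIntegrable', circleAverage_poissonKernel_smul_add_conj hp hq hw]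
  calc dist (Real.circleAverage (poissonKernel c w • f) c R) (f w)
      ≤ dist _ (p w + conj (q w)) + dist (f w) (p w + conj (q w)) := dist_triangle_right _ _ _
    _ ≤ ε / 2 + ε / 2 := by
        rw [dist_eq_norm, dist_eq_norm, hdiff]
        exact add_le_add (norm_circleAverage_poissonKernel_smul_le hw (hf.sub hg)
          fun z hz => hpq z (mem_insert_of_mem w (hR ▸ hz))) (hpq w (mem_insert w _))
    _ = ε := add_halves ε

lemma differentiableOn_circleAverage_herglotzRieszKernel {E : Type*} [NormedAddCommGroup E]
    [NormedSpace ℂ E] {f : ℂ → E} (hf : CircleIntegrable f c R) : DifferentiableOn ℂ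
      (fun w => Real.circleAverage (fun z => herglotzRieszKernel c w z • f z) c R) (ball c R) := by
  have hf0 : CircleIntegrable (fun z => f (z + c)) 0 R := by
    simpa [CircleIntegrable, circleMap, add_comm] using hf
  simp_rw [← Real.circleAverage_map_add_const (c := c), herglotzRieszKernel_add_const]
  refine (differentiableOn_circleAverage_herglotzRieszKernel_smul hf0).comp
    (differentiable_id.sub_const c).differentiableOn fun z hz => ?_
  rwa [mem_ball_zero_iff, ← mem_ball_iff_norm]

lemma circleAverage_poissonKernel_smul_eq_add_conj {f : ℂ → ℂ} (hw : w ∈ ball c R)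
    (hf : ContinuousOn f (sphere c |R|)) :
    Real.circleAverage (poissonKernel c w • f) c R =
      Real.circleAverage (fun z => herglotzRieszKernel c w z • (f z / 2)) c R +
        conj (Real.circleAverage (fun z => herglotzRieszKernel c w z • (conj (f z) / 2)) c R) := by
  have hH := continuousOn_herglotzRieszKernel_sphere hw
  have hA : CircleIntegrable (fun z => herglotzRieszKernel c w z • (f z / 2)) c R :=
    (hH.smul (hf.div_const 2)).circleIntegrable'
  have hB : CircleIntegrable (fun z => herglotzRieszKernel c w z • (conj (f z) / 2)) c R :=
    (hH.smul ((continuous_conj.comp_continuousOn hf).div_const 2)).circleIntegrable'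
  rw [← circleAverage_add_conj hA hB]
  congr 1
  ext z
  simp only [poissonKernel_eq_re_herglotzRieszKernel, Pi.smul_apply', Function.comp_apply,
    real_smul, smul_eq_mul, re_eq_add_conj, map_mul, map_div₀, conj_conj, map_ofNat]
  ring

lemma exists_differentiableOn_eq_add_conj {f : ℂ → ℂ} {s : Set ℂ}
    (hf : ContinuousOn f (sphere c R))
    (happrox : ∀ ε > 0, ∃ p q : ℂ → ℂ, DiffContOnCl ℂ p (ball c R) ∧ DiffContOnCl ℂ q (ball c R) ∧
      ∀ z ∈ sphere c R ∪ s, ‖f z - (p z + conj (q z))‖ ≤ ε) :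
    ∃ A B : ℂ → ℂ, DifferentiableOn ℂ A (ball c R) ∧ DifferentiableOn ℂ B (ball c R) ∧
      ∀ w ∈ ball c R ∩ s, f w = A w + conj (B w) := by
  rcases le_or_gt R 0 with hR | hR
  · exact ⟨0, 0, by fun_prop, by fun_prop, by simp [ball_eq_empty.2 hR]⟩
  rw [← abs_of_pos hR] at hf
  refine ⟨_, _, differentiableOn_circleAverage_herglotzRieszKernel
      (hf.div_const 2).circleIntegrable',
    differentiableOn_circleAverage_herglotzRieszKernel
      ((continuous_conj.comp_continuousOn hf).div_const 2).circleIntegrable',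
    fun w ⟨hw, hws⟩ => ?_⟩
  rw [← circleAverage_poissonKernel_smul_of_approx hw hf fun ε hε => ?_]
  · exact circleAverage_poissonKernel_smul_eq_add_conj hw hf
  · obtain ⟨p, q, hp, hq, hpq⟩ := happrox ε hε
    exact ⟨p, q, hp, hq, fun z hz => hpq z (insert_subset (.inr hws) subset_union_left hz)⟩

end PoissonIntegral

section TrigonometricApproximation

lemma exists_polynomial_eq_toAddCircle_add_star {ψ : C(AddCircle (2 * Real.pi), ℂ)}
    (hψ : ψ ∈ Submodule.span ℂ (range fourier)) :
    ∃ p q : ℂ[X], ψ = p.toAddCircle + star q.toAddCircle := by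
  induction hψ using Submodule.span_induction with
  | mem ψ hψ =>
    obtain ⟨n, rfl⟩ := hψ
    obtain ⟨m, rfl | rfl⟩ := n.eq_nat_or_neg
    · exact ⟨.X ^ m, 0, by simp [Polynomial.toAddCircle_X_pow_eq_fourier]⟩
    · refine ⟨0, .X ^ m, ?_⟩
      ext x
      rw [fourier_neg, Polynomial.toAddCircle_X_pow_eq_fourier]
      simp
  | zero => exact ⟨0, 0, by simp⟩
  | add ψ₁ ψ₂ _ _ h₁ h₂ =>
    obtain ⟨p₁, q₁, rfl⟩ := h₁
    obtain ⟨p₂, q₂, rfl⟩ := h₂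
    refine ⟨p₁ + p₂, q₁ + q₂, ?_⟩
    rw [map_add, map_add, star_add]
    abel
  | smul a ψ _ h =>
    obtain ⟨p, q, rfl⟩ := h
    exact ⟨a • p, conj a • q, by simp⟩

lemma exists_polynomial_forall_circle_norm_sub_le (φ : C(Circle, ℂ)) {ε : ℝ} (hε : 0 < ε) :
    ∃ p q : ℂ[X], ∀ z : Circle, ‖φ z - (p.eval (z : ℂ) + conj (q.eval (z : ℂ)))‖ ≤ ε := by
  have : Fact (0 < 2 * Real.pi) := ⟨Real.two_pi_pos⟩
  let toCircle : C(AddCircle (2 * Real.pi), Circle) := ⟨_, AddCircle.continuous_toCircle⟩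
  have hφ : φ.comp toCircle ∈
      (Submodule.span ℂ (range (fourier (T := 2 * Real.pi)))).topologicalClosure := by
    rw [span_fourier_closure_eq_top]
    exact Submodule.mem_top
  obtain ⟨ψ, hψ, hφψ⟩ := Metric.mem_closure_iff.1 hφ ε hε
  obtain ⟨p, q, rfl⟩ := exists_polynomial_eq_toAddCircle_add_star hψ
  refine ⟨p, q, fun z => ?_⟩
  obtain ⟨x, rfl⟩ := (AddCircle.homeomorphCircle Real.two_pi_pos.ne').surjective z
  rw [AddCircle.homeomorphCircle_apply]
  have hx := (ContinuousMap.dist_apply_le_dist x).trans hφψ.le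
  rw [dist_eq_norm] at hx
  simpa [toCircle, Polynomial.toAddCircle, Polynomial.aeval_continuousMap_apply] using hx

lemma exists_differentiable_norm_sub_add_conj_le {f : ℂ → ℂ} {c : ℂ} {R ε : ℝ} (hR : 0 < R)
    (hf : ContinuousOn f (sphere c R)) (hε : 0 < ε) :
    ∃ p q : ℂ → ℂ, Differentiable ℂ p ∧ Differentiable ℂ q ∧
      ∀ z ∈ sphere c R, ‖f z - (p z + conj (q z))‖ ≤ ε := by
  have hmem (u : Circle) : c + R * (u : ℂ) ∈ sphere c R := by
    rw [mem_sphere_iff_norm, add_sub_cancel_left, norm_mul, Circle.norm_coe, mul_one, norm_real,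
      Real.norm_of_nonneg hR.le]
  let φ : C(Circle, ℂ) := ⟨fun u => f (c + R * u), hf.comp_continuous (by fun_prop) hmem⟩
  obtain ⟨p, q, hpq⟩ := exists_polynomial_forall_circle_norm_sub_le φ hε
  refine ⟨fun z => p.eval ((z - c) / R), fun z => q.eval ((z - c) / R), by fun_prop, by fun_prop,
    fun z hz => ?_⟩
  have hunit : ‖(z - c) / R‖ = 1 := by
    rw [norm_div, mem_sphere_iff_norm.1 hz, norm_real, Real.norm_of_nonneg hR.le, div_self hR.ne']
  have hz_eq : c + R * ((z - c) / R) = z := by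
    rw [mul_div_cancel₀ _ (ofReal_ne_zero.2 hR.ne'), add_sub_cancel]
  simpa only [φ, ContinuousMap.coe_mk, hz_eq] using
    hpq ⟨(z - c) / R, mem_sphere_zero_iff_norm.2 hunit⟩

end TrigonometricApproximation

section AddConj

variable {A B f : ℂ → ℂ} {c : ℂ}

lemma differentiableAt_conj_comp_iff_deriv_eq_zero (hB : DifferentiableAt ℂ B c) :
    DifferentiableAt ℂ (fun z => conj (B z)) c ↔ deriv B c = 0 := by
  have hconj : HasFDerivAt (𝕜 := ℝ) (fun z => conj (B z))
      (conjCLE.toContinuousLinearMap ∘L (fderiv ℂ B c).restrictScalars ℝ) c :=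
    conjCLE.toContinuousLinearMap.hasFDerivAt.comp c (hB.hasFDerivAt.restrictScalars ℝ)
  rw [differentiableAt_complex_iff_differentiableAt_real, hconj.fderiv,
    and_iff_right hconj.differentiableAt]
  simp [fderiv_eq_smul_deriv, neg_eq_self]

lemma differentiableAt_iff_deriv_eq_zero_of_eq_add_conj (hA : DifferentiableAt ℂ A c)
    (hB : DifferentiableAt ℂ B c) (hf : ∀ᶠ z in 𝓝 c, f z = A z + conj (B z)) :
    DifferentiableAt ℂ f c ↔ deriv B c = 0 := by
  have hf' : f =ᶠ[𝓝 c] A + fun z => conj (B z) := hf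
  rw [hf'.differentiableAt_iff, hA.add_iff_right,
    differentiableAt_conj_comp_iff_deriv_eq_zero hB]

lemma differentiableAt_of_mem_closure_of_eq_add_conj {s : Set ℂ} (hs : IsOpen s)
    (hA : DifferentiableOn ℂ A s) (hB : DifferentiableOn ℂ B s)
    (hf : ∀ z ∈ s, f z = A z + conj (B z)) (hc : c ∈ s)
    (hcl : c ∈ closure {z | DifferentiableAt ℂ f z}) : DifferentiableAt ℂ f c := by
  have hiff : ∀ z ∈ s, DifferentiableAt ℂ f z ↔ deriv B z = 0 := fun z hz =>
    differentiableAt_iff_deriv_eq_zero_of_eq_add_conj (hA.differentiableAt (hs.mem_nhds hz))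
      (hB.differentiableAt (hs.mem_nhds hz)) ((hs.eventually_mem hz).mono hf)
  rw [hiff c hc]
  by_contra hne
  have hBc : ContinuousAt (deriv B) c :=
    ((hB.deriv hs).differentiableAt (hs.mem_nhds hc)).continuousAt
  obtain ⟨z, hz, hBz, hzs⟩ := ((mem_closure_iff_frequently.1 hcl).and_eventually
    ((hBc.eventually_ne hne).and (hs.eventually_mem hc))).exists
  exact hBz ((hiff z hzs).1 hz)

end AddConj

lemma exists_forall_norm_sub_add_conj_le_of_diff_preimage_zero {f : ℂ → ℂ} {c : ℂ} {R ε : ℝ}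
    (hR : 0 < R) (hf : ContinuousOn f (closedBall c R))
    (hd : DifferentiableOn ℂ f (ball c R \ f ⁻¹' {0})) (hε : 0 < ε) :
    ∃ p q : ℂ → ℂ, Differentiable ℂ p ∧ Differentiable ℂ q ∧
      ∀ z ∈ sphere c R ∪ closure (ball c R \ f ⁻¹' {0}), ‖f z - (p z + conj (q z))‖ ≤ ε := by
  obtain ⟨p, q, hp, hq, hpq⟩ :=
    exists_differentiable_norm_sub_add_conj_le hR (hf.mono sphere_subset_closedBall) hε
  refine ⟨p, q, hp, hq, fun z hz => hz.elim (hpq z) fun hzcl => ?_⟩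
  have hcl : closure (ball c R) = closedBall c R := closure_ball c hR.ne'
  have hfp : DiffContOnCl ℂ (f - p) (ball c R \ f ⁻¹' {0}) :=
    DiffContOnCl.sub ⟨hd, hf.mono (hcl ▸ closure_mono sdiff_subset)⟩ hp.diffContOnCl
  have hsub (w : ℂ) : (f - p) w + conj ((-q) w) = f w - (p w + conj (q w)) := by
    simp only [Pi.sub_apply, Pi.neg_apply, map_neg]
    ring
  rw [← hsub]
  refine norm_add_conj_le_of_forall_mem_frontier_of_diff_preimage_zero isOpen_ball isBounded_ball
    (hcl ▸ hf) hd hfp hq.neg.diffContOnCl (fun w hw => ?_) hzcl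
  rw [hsub]
  exact hpq w (frontier_ball c hR.ne' ▸ hw.1)

lemma differentiableAt_of_mem_closure_diff_preimage_zero {f : ℂ → ℂ} {c : ℂ} {R : ℝ} (hR : 0 < R)
    (hf : ContinuousOn f (closedBall c R)) (hd : DifferentiableOn ℂ f (ball c R \ f ⁻¹' {0}))
    (hc : c ∈ closure (ball c R \ f ⁻¹' {0})) : DifferentiableAt ℂ f c := by
  obtain ⟨A, B, hA, hB, hAB⟩ := exists_differentiableOn_eq_add_conj
    (s := closure (ball c R \ f ⁻¹' {0})) (hf.mono sphere_subset_closedBall) fun ε hε => by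
      obtain ⟨p, q, hp, hq, hpq⟩ :=
        exists_forall_norm_sub_add_conj_le_of_diff_preimage_zero hR hf hd hε
      exact ⟨p, q, hp.diffContOnCl, hq.diffContOnCl, hpq⟩
  have hball : ball c (R / 2) ⊆ ball c R := ball_subset_ball (half_le_self hR.le)
  refine differentiableAt_of_mem_closure_of_eq_add_conj isOpen_ball (hA.mono hball) (hB.mono hball)
    (fun z hz => hAB z ⟨hball hz, ball_half_subset_closure_diff_preimage_zero hf hd hc hz⟩)
    (mem_ball_self (half_pos hR)) (closure_mono (fun z hz => hd.differentiableAt ?_) hc)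
  exact (isOpen_diff_preimage_zero isOpen_ball (hf.mono ball_subset_closedBall)).mem_nhds hz

theorem rado_one_variable {U : Set ℂ} (hU : IsOpen U) {f : ℂ → ℂ} (hf : ContinuousOn f U)
    (hd : ∀ z ∈ U \ f ⁻¹' {0}, DifferentiableAt ℂ f z) : ∀ z ∈ U, DifferentiableAt ℂ f z := by
  intro c hc
  obtain ⟨R, hR, hRU⟩ := nhds_basis_closedBall.mem_iff.1 (hU.mem_nhds hc)
  by_cases hcl : c ∈ closure (ball c R \ f ⁻¹' {0})
  · exact differentiableAt_of_mem_closure_diff_preimage_zero hR (hf.mono hRU) (fun z hz =>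
      (hd z ⟨hRU (ball_subset_closedBall hz.1), hz.2⟩).differentiableWithinAt) hcl
  · refine (differentiableAt_const (0 : ℂ)).congr_of_eventuallyEq ?_
    filter_upwards [isClosed_closure.isOpen_compl.mem_nhds hcl, ball_mem_nhds c hR] with z hz hzR
    by_contra hfz
    exact hz (subset_closure ⟨hzR, hfz⟩)

section Line

variable {𝕜 E F : Type*} [NontriviallyNormedField 𝕜] [NormedAddCommGroup E] [NormedSpace 𝕜 E]
  [NormedAddCommGroup F] [NormedSpace 𝕜 F] {f : E → F} {x v : E} {r : ℝ}

lemma differentiableOn_comp_add_smul {s : Set E} (hd : ∀ y ∈ s, LineDifferentiableAt 𝕜 f y v) :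
    DifferentiableOn 𝕜 (fun t : 𝕜 => f (x + t • v)) ((fun t : 𝕜 => x + t • v) ⁻¹' s) := by
  intro t ht
  have hline : DifferentiableAt 𝕜 (fun a : 𝕜 => f (x + t • v + a • v)) (t - t) := by
    rw [sub_self]
    exact hd _ ht
  have hcomp := hline.comp (f := fun a => a - t) t (differentiableAt_id.sub_const t)
  refine (hcomp.congr_of_eventuallyEq (.of_forall fun a => ?_)).differentiableWithinAt
  simp [add_assoc, ← add_smul]

lemma mapsTo_add_smul_ball : MapsTo (fun t : 𝕜 => x + t • v) (ball 0 (r / ‖v‖)) (ball x r) := by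
  intro t ht
  rcases eq_or_ne v 0 with rfl | hv
  · simp at ht
  · rw [mem_ball_zero_iff, lt_div_iff₀ (norm_pos_iff.2 hv)] at ht
    rwa [mem_ball_iff_norm, add_sub_cancel_left, norm_smul]

end Line

section GateauxFrechet

variable {E F : Type*} [NormedAddCommGroup E] [NormedSpace ℂ E] [NormedAddCommGroup F]
  [NormedSpace ℂ F] {f : E → F} {x v w : E} {M r : ℝ}

lemma norm_sub_le_div_mul_of_lineDifferentiableAt
    (hd : ∀ y ∈ ball x r, LineDifferentiableAt ℂ f y v)
    (hM : MapsTo f (ball x r) (closedBall (f x) M)) (hv : ‖v‖ < r) :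
    ‖f (x + v) - f x‖ ≤ M / r * ‖v‖ := by
  rcases eq_or_ne v 0 with rfl | hv0
  · simp
  have hline := dist_le_div_mul_dist_of_mapsTo_ball (z := 1)
    ((differentiableOn_comp_add_smul hd).mono mapsTo_add_smul_ball)
    (by simpa [Function.comp_def] using hM.comp mapsTo_add_smul_ball)
    (by rwa [mem_ball_zero_iff, norm_one, one_lt_div (norm_pos_iff.2 hv0)])
  simpa [dist_eq_norm, div_div_eq_mul_div, div_mul_eq_mul_div] using hline

lemma norm_second_difference_le_of_lineDifferentiableAt
    (hd : ∀ y ∈ ball x (2 * r), ∀ u, LineDifferentiableAt ℂ f y u)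
    (hM : ∀ y ∈ ball x (2 * r), ∀ z ∈ ball x (2 * r), dist (f y) (f z) ≤ M)
    (hv : ‖v‖ < r) (hw : ‖w‖ < r) :
    ‖f (x + v + w) - f (x + v) - (f (x + w) - f x)‖ ≤ 2 * M / r ^ 2 * ‖v‖ * ‖w‖ := by
  have hr : 0 < r := (norm_nonneg v).trans_lt hv
  have hball : ∀ y ∈ ball x r, ball y r ⊆ ball x (2 * r) := fun y hy =>
    ball_subset_ball' (by linarith [mem_ball.1 hy])
  have hfirst : ∀ y ∈ ball x r, ‖f (y + w) - f y‖ ≤ M / r * ‖w‖ := fun y hy =>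
    norm_sub_le_div_mul_of_lineDifferentiableAt (fun z hz => hd z (hball y hy hz) w)
      (fun z hz => hM z (hball y hy hz) y (hball y hy (mem_ball_self hr))) hw
  have hline : ∀ y ∈ ball x r, LineDifferentiableAt ℂ (fun z => f (z + w) - f z) y v := by
    intro y hy
    have hyw : y + w ∈ ball x (2 * r) := hball y hy (by simpa [mem_ball_iff_norm] using hw)
    have hshift : LineDifferentiableAt ℂ (fun z => f (z + w)) y v := by
      simpa only [LineDifferentiableAt, add_right_comm] using hd _ hyw v
    exact hshift.sub (hd y (hball y hy (mem_ball_self hr)) v)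
  have hmaps : MapsTo (fun z => f (z + w) - f z) (ball x r)
      (closedBall (f (x + w) - f x) (2 * (M / r * ‖w‖))) := by
    intro y hy
    rw [mem_closedBall, dist_eq_norm]
    linarith [norm_sub_le (f (y + w) - f y) (f (x + w) - f x), hfirst y hy,
      hfirst x (mem_ball_self hr)]
  calc ‖f (x + v + w) - f (x + v) - (f (x + w) - f x)‖
      ≤ 2 * (M / r * ‖w‖) / r * ‖v‖ :=
        norm_sub_le_div_mul_of_lineDifferentiableAt (f := fun z => f (z + w) - f z) hline hmaps hv
    _ = 2 * M / r ^ 2 * ‖v‖ * ‖w‖ := by ring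

lemma lineDeriv_add_of_lineDifferentiableAt (hr : 0 < r)
    (hd : ∀ y ∈ ball x (2 * r), ∀ u, LineDifferentiableAt ℂ f y u)
    (hM : ∀ y ∈ ball x (2 * r), ∀ z ∈ ball x (2 * r), dist (f y) (f z) ≤ M) (v w : E) :
    lineDeriv ℂ f x (v + w) = lineDeriv ℂ f x v + lineDeriv ℂ f x w := by
  have hlin (u : E) := hasLineDerivAt_iff_isLittleO_nhds_zero.1
    (hd x (mem_ball_self (by positivity)) u).hasLineDerivAt
  have hsmall (u : E) : ∀ᶠ t in 𝓝 (0 : ℂ), ‖t • u‖ < r :=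
    (continuous_norm.comp (continuous_id.smul continuous_const)).continuousAt.eventually_lt_const
      (by simpa using hr)
  have hsecond : (fun t : ℂ => f (x + t • v + t • w) - f (x + t • v) - (f (x + t • w) - f x))
      =o[𝓝 0] fun t => t := by
    refine (Asymptotics.IsBigO.of_bound (2 * M / r ^ 2 * ‖v‖ * ‖w‖) ?_).trans_isLittleO
      (Asymptotics.isLittleO_pow_id one_lt_two)
    filter_upwards [hsmall v, hsmall w] with t hv hw
    refine (norm_second_difference_le_of_lineDifferentiableAt hd hM hv hw).trans_eq ?_
    rw [norm_smul, norm_smul, norm_pow]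
    ring
  refine (hasLineDerivAt_iff_isLittleO_nhds_zero.2
    ((hsecond.add ((hlin v).add (hlin w))).congr_left fun t => ?_)).lineDeriv
  rw [smul_add, smul_add, ← add_assoc x]
  abel

lemma norm_lineDeriv_le_div_mul (hr : 0 < r)
    (hd : ∀ y ∈ ball x r, ∀ u, LineDifferentiableAt ℂ f y u)
    (hM : MapsTo f (ball x r) (closedBall (f x) M)) (v : E) :
    ‖lineDeriv ℂ f x v‖ ≤ M / r * ‖v‖ := by
  have hM0 : 0 ≤ M := nonempty_closedBall.1 ⟨_, hM (mem_ball_self hr)⟩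
  refine norm_lineDeriv_le_of_lip' ℂ (by positivity) ?_
  filter_upwards [ball_mem_nhds x hr] with y hy
  simpa using norm_sub_le_div_mul_of_lineDifferentiableAt (v := y - x)
    (fun z hz => hd z hz _) hM (mem_ball_iff_norm.1 hy)

/-- Along the line `t ↦ x + t • v`, the remainder vanishes to second order at `0` and is bounded
by `2 * M`, so this is the Schwarz lemma of order two. -/
lemma norm_sub_lineDeriv_le (hr : 0 < r)
    (hd : ∀ y ∈ ball x r, ∀ u, LineDifferentiableAt ℂ f y u)
    (hM : MapsTo f (ball x r) (closedBall (f x) M)) (hv : ‖v‖ < r) :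
    ‖f (x + v) - f x - lineDeriv ℂ f x v‖ ≤ 2 * M * (‖v‖ / r) ^ 2 := by
  rcases eq_or_ne v 0 with rfl | hv0
  · simp [lineDeriv_zero]
  have hv_pos := norm_pos_iff.2 hv0
  set φ : ℂ → F := fun t => f (x + t • v) - t • lineDeriv ℂ f x v with hφ
  have hφd : DifferentiableOn ℂ φ (ball 0 (r / ‖v‖)) :=
    ((differentiableOn_comp_add_smul fun y hy => hd y hy v).mono mapsTo_add_smul_ball).sub
      (by fun_prop)
  have hφM : MapsTo φ (ball 0 (r / ‖v‖)) (closedBall (φ 0) (2 * M)) := by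
    intro t ht
    have hf : ‖f (x + t • v) - f x‖ ≤ M := mem_closedBall_iff_norm.1 (hM (mapsTo_add_smul_ball ht))
    have hlin : ‖t • lineDeriv ℂ f x v‖ ≤ M := by
      have hM0 := (norm_nonneg _).trans hf
      rw [← lineDeriv_smul]
      refine (norm_lineDeriv_le_div_mul hr hd hM _).trans ?_
      have := mem_ball_iff_norm.1 (mapsTo_add_smul_ball (x := x) ht)
      rw [add_sub_cancel_left] at this
      calc M / r * ‖t • v‖ ≤ M / r * r := by gcongr
        _ = M := div_mul_cancel₀ M hr.ne'
    rw [mem_closedBall_iff_norm, hφ]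
    simp only [zero_smul, add_zero, sub_zero]
    rw [sub_right_comm]
    linarith [norm_sub_le (f (x + t • v) - f x) (t • lineDeriv ℂ f x v)]
  have hφo : (fun t => φ t - φ 0) =o[𝓝 0] fun t => ‖t - 0‖ ^ 1 := by
    have := hasLineDerivAt_iff_isLittleO_nhds_zero.1
      (hd x (mem_ball_self hr) v).hasLineDerivAt
    simpa [hφ, sub_right_comm] using this.norm_right
  have hone := dist_le_mul_div_pow_of_mapsTo_ball_of_isLittleO (z := 1) hφd hφM hφo
    (by rwa [mem_ball_zero_iff, norm_one, one_lt_div hv_pos])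
  simpa [hφ, dist_eq_norm, sub_right_comm] using hone

theorem differentiableAt_of_eventually_lineDifferentiableAt (hf : ContinuousAt f x)
    (hd : ∀ᶠ y in 𝓝 x, ∀ v, LineDifferentiableAt ℂ f y v) : DifferentiableAt ℂ f x := by
  obtain ⟨ρ, hρ, hρd⟩ := nhds_basis_ball.eventually_iff.1
    (hd.and (hf.eventually (ball_mem_nhds (f x) one_half_pos)))
  obtain ⟨r, rfl⟩ : ∃ r, ρ = 2 * r := ⟨ρ / 2, (mul_div_cancel₀ ρ two_ne_zero).symm⟩
  have hr : 0 < r := pos_of_mul_pos_right hρ zero_le_two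
  have hd_large : ∀ y ∈ ball x (2 * r), ∀ v, LineDifferentiableAt ℂ f y v := fun y hy => (hρd hy).1
  have hosc : ∀ y ∈ ball x (2 * r), ∀ z ∈ ball x (2 * r), dist (f y) (f z) ≤ 1 := fun y hy z hz =>
    (dist_triangle_right _ _ (f x)).trans
      (by linarith [mem_ball.1 (hρd hy).2, mem_ball.1 (hρd hz).2])
  have hsub : ball x r ⊆ ball x (2 * r) := ball_subset_ball (by linarith)
  have hd_small : ∀ y ∈ ball x r, ∀ v, LineDifferentiableAt ℂ f y v := fun y hy =>
    hd_large y (hsub hy)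
  have hmaps : MapsTo f (ball x r) (closedBall (f x) 1) := fun y hy =>
    hosc y (hsub hy) x (mem_ball_self hρ)
  let L : E →ₗ[ℂ] F :=
    { toFun := lineDeriv ℂ f x
      map_add' := lineDeriv_add_of_lineDifferentiableAt hr hd_large hosc
      map_smul' := fun c v => lineDeriv_smul }
  have hL : HasFDerivAt f
      (L.mkContinuous (1 / r) (norm_lineDeriv_le_div_mul hr hd_small hmaps)) x := by
    rw [hasFDerivAt_iff_isLittleO_nhds_zero]
    refine (Asymptotics.IsBigO.of_bound (2 / r ^ 2) ?_).trans_isLittleO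
      (Asymptotics.isLittleO_norm_pow_id one_lt_two)
    filter_upwards [ball_mem_nhds 0 hr] with v hv
    refine (norm_sub_lineDeriv_le hr hd_small hmaps (mem_ball_zero_iff.1 hv)).trans_eq ?_
    rw [norm_pow, norm_norm]
    ring
  exact hL.differentiableAt

end GateauxFrechet

theorem rado_several_variables_general {E : Type*} [NormedAddCommGroup E] [NormedSpace ℂ E]
    {U : Set E} (hU : IsOpen U) {g : E → ℂ} (hcont : ContinuousOn g U)
    (hdiff : ∀ z ∈ U \ g ⁻¹' {0}, DifferentiableAt ℂ g z) : ∀ z ∈ U, DifferentiableAt ℂ g z := by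
  intro z hz
  refine differentiableAt_of_eventually_lineDifferentiableAt (hcont.continuousAt (hU.mem_nhds hz))
    ((hU.eventually_mem hz).mono fun y hy v => ?_)
  let line : ℂ → E := fun t => y + t • v
  have hline : Differentiable ℂ line := by fun_prop
  exact rado_one_variable (f := g ∘ line) (hU.preimage hline.continuous)
    (hcont.comp hline.continuous.continuousOn (mapsTo_preimage line U))
    (fun t ht => (hdiff (line t) ht).comp t hline.differentiableAt) 0 (by simpa [line] using hy)

/-- Radó's theorem in several variables: if `g` is continuous on an open set
`U ⊆ ℂⁿ` and holomorphic at every point of `U` outside the zero set of `g`,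
then `g` is holomorphic on all of `U`. -/
theorem rado_several_variables (n : ℕ) (U : Set (Fin n → ℂ)) (hU : IsOpen U)
    (g : (Fin n → ℂ) → ℂ) (hcont : ContinuousOn g U)
    (hdiff : ∀ z ∈ U \ g ⁻¹' {0}, DifferentiableAt ℂ g z) :
    ∀ z ∈ U, DifferentiableAt ℂ g z :=
  rado_several_variables_general hU hcont hdiff
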